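/- The vector field X : ℍ² → ℍ² given by X(z,w) := (z²·w, -z·w²) does not have divergence: there is no function g : ℍ² → ℍ such that Div X(z,w)[h] = h · g(z,w) for all z, w, h ∈ ℍ. (Indeed Div X(z,w)[h] = h·z·w - z·w·h, which is not left-linear in h.) -/

import Mathlib

/-!
The derivative of `a ↦ a²` at `a` is `h ↦ ah + ha`, so the divergence of `(z²w, -zw²)` is the
commutator `h ↦ h(zw) - (zw)h`, which vanishes at `h = 1`. A map of the form `h ↦ hg` that vanishes
at `1` is zero, so `zw` would be central; with `w = 1` the whole algebra would be commutative.
-/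

theorem commute_of_forall_mul_sub_mul_eq_mul {R : Type*} [Ring R] {c g : R}
    (hg : ∀ h, h * c - c * h = h * g) (h : R) : Commute h c := by
  have g_eq_zero : g = 0 := by simpa using (hg 1).symm
  have commutator_eq_zero : h * c - c * h = 0 := by rw [hg, g_eq_zero, mul_zero]
  exact sub_eq_zero.mp commutator_eq_zero

theorem not_commute_quaternionAlgebra_i_j {R : Type*} [CommRing R] [NeZero (2 : R)]
    {c₁ c₂ c₃ : R} : ¬ Commute (⟨0, 1, 0, 0⟩ : QuaternionAlgebra R c₁ c₂ c₃) ⟨0, 0, 1, 0⟩ := by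
  intro i_comm_j
  have one_eq_neg_one : (1 : R) = -1 := by
    simpa using congrArg QuaternionAlgebra.imK i_comm_j.eq
  exact two_ne_zero (α := R) (by linear_combination one_eq_neg_one)

section Divergence

variable (𝕜 : Type*) [NontriviallyNormedField 𝕜]

/-- The divergence `Div X(z, w) = D₁ + D₂`, as a linear map of the direction: `D₁` is the
partial derivative of `X₁` in `z` and `D₂` that of `X₂` in `w`. -/
noncomputable def divergence {E : Type*} [NormedAddCommGroup E] [NormedSpace 𝕜 E]
    (X : E × E → E × E) (p : E × E) : E →L[𝕜] E :=
  fderiv 𝕜 (fun z => (X (z, p.2)).1) p.1 + fderiv 𝕜 (fun w => (X (p.1, w)).2) p.2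

variable {A : Type*} [NormedRing A] [NormedAlgebra 𝕜 A]

/-- The vector field `X` has divergence if `Div X(z, w)[h] = h · g(z, w)` for some function `g`,
i.e. if every `Div X(z, w)` is left `A`-linear. -/
def HasDivergence (X : A × A → A × A) : Prop :=
  ∃ g : A × A → A, ∀ p h, divergence 𝕜 X p h = h * g p

theorem fderiv_sq_apply (a h : A) : fderiv 𝕜 (fun x => x ^ 2) a h = a * h + h * a := by
  simp [fderiv_fun_pow', Finset.sum_range_succ]

theorem divergence_sq_mul_neg_mul_sq_apply (z w h : A) :
    divergence 𝕜 (fun p : A × A => (p.1 ^ 2 * p.2, -(p.1 * p.2 ^ 2))) (z, w) h =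
      h * (z * w) - z * w * h := by
  have fderiv_fst : fderiv 𝕜 (fun z' => z' ^ 2 * w) z h = (z * h + h * z) * w := by
    rw [fderiv_mul_const' (differentiableAt_pow 2), ← fderiv_sq_apply 𝕜]
    rfl
  have fderiv_snd : fderiv 𝕜 (fun w' => -(z * w' ^ 2)) w h = -(z * (w * h + h * w)) := by
    rw [fderiv_fun_neg, fderiv_const_mul (differentiableAt_pow 2), ← fderiv_sq_apply 𝕜]
    rfl
  calc
    _ = (z * h + h * z) * w + -(z * (w * h + h * w)) := congrArg₂ (· + ·) fderiv_fst fderiv_snd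
    _ = h * (z * w) - z * w * h := by noncomm_ring

theorem no_divergence_example_general {a b : A} (hab : ¬ Commute a b) :
    ¬ HasDivergence 𝕜 (fun p : A × A => (p.1 ^ 2 * p.2, -(p.1 * p.2 ^ 2))) := by
  rintro ⟨g, hg⟩
  have commutator_eq_mul (h : A) : h * b - b * h = h * g (b, 1) := by
    simpa only [divergence_sq_mul_neg_mul_sq_apply, mul_one] using hg (b, 1) h
  exact hab (commute_of_forall_mul_sub_mul_eq_mul commutator_eq_mul a)

end Divergence

/-- The vector field `X(z,w) = (z²w, -zw²)` does not have divergence: there is no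
`g : ℍ² → ℍ` with `Div X(z,w)[h] = h · g(z,w)` for all `z, w, h`. -/
theorem no_divergence_example :
    ¬ ∃ g : Quaternion ℝ × Quaternion ℝ → Quaternion ℝ, ∀ z w h : Quaternion ℝ,
        fderiv ℝ (fun z' => z' ^ 2 * w) z h
          + fderiv ℝ (fun w' => -(z * w' ^ 2)) w h = h * g (z, w) :=
  fun ⟨g, hg⟩ => no_divergence_example_general ℝ not_commute_quaternionAlgebra_i_j
    ⟨g, fun p => hg p.1 p.2⟩
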